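/- Let q and t be real numbers with q > 1, t > 0, and q³·t < 1. Then the triple series ∑_{X≥1} ∑_{Y≥1} ∑_{Z≥1} q^{3X − 3Y − Z} · t^{3X − min(X, 2Y) − min(X, 4Y+3Z)} converges and equals t/((q − 1)·(1 − q⁻³)·(1 − t)) + q²·t²/((1 − q⁻¹)·(1 − t)·(1 − q³·t²)) + q⁵·t⁴/((1 − q⁻¹)·(1 − q³·t²)·(1 − q⁶·t⁴)) + q⁸·t⁶/((1 − q⁻¹)·(1 − q⁹·t⁶)·(1 − q⁶·t⁴)) + q¹¹·t⁸/((1 − q⁻¹)·(1 − q⁹·t⁶)·(1 − q²·t²)) + q¹⁴·t¹⁰/((1 − q⁹·t⁶)·(1 − q⁵·t⁴)·(1 − q²·t²)) + q¹⁷·t¹²/((1 − q⁹·t⁶)·(1 − q⁸·t⁶)·(1 − q⁵·t⁴)) + q²⁰·t¹⁵/((1 − q⁹·t⁶)·(1 − q³·t³)·(1 − q⁸·t⁶)). -/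

import Mathlib

/-!
On `ℕ³` the exponent of `t` in the summand is piecewise linear, with breaks only along `X = 2Y` and
`X = 4Y + 3Z`. The eight intervals cut out in the values of `X` by the thresholds
`0, Y, 2Y, 3Y, 4Y, 4Y + Z, 4Y + 2Z, 4Y + 3Z` partition the positive triples into half-open
unimodular simplicial cones on which this exponent is linear. Over such a cone the summand is a
product of three geometric sequences, and the eight sums are, in this order, the eight terms of the
formula. A ratio `q ^ e * t ^ d` with `2 * e ≤ 3 * d` and `(e, d)` not `(0, 0)` has norm less than
`1` as soon as `1 < ‖q‖` and `‖q ^ 3 * t ^ 2‖ < 1`, and the exponents of all ratios satisfy this.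
-/

theorem hasSum_mul_of_summable_norm {R ι κ : Type*} [NormedRing R] {f : ι → R} {g : κ → R}
    {a b : R} (hf : HasSum f a) (hg : HasSum g b) (hf' : Summable fun i => ‖f i‖)
    (hg' : Summable fun j => ‖g j‖) : HasSum (fun p : ι × κ => f p.1 * g p.2) (a * b) :=
  hf.mul hg (summable_mul_of_summable_norm' hf' hf.summable hg' hg.summable)

theorem hasSum_geometric_prod₃ {𝕜 : Type*} [NormedField 𝕜] {a b c : 𝕜} (ha : ‖a‖ < 1)
    (hb : ‖b‖ < 1) (hc : ‖c‖ < 1) :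
    HasSum (fun n : ℕ × ℕ × ℕ => a ^ n.1 * (b ^ n.2.1 * c ^ n.2.2))
      ((1 - a)⁻¹ * ((1 - b)⁻¹ * (1 - c)⁻¹)) := by
  have ha' := summable_norm_geometric_of_norm_lt_one ha
  have hb' := summable_norm_geometric_of_norm_lt_one hb
  have hc' := summable_norm_geometric_of_norm_lt_one hc
  exact hasSum_mul_of_summable_norm (f := fun n => a ^ n) (g := fun n : ℕ × ℕ => b ^ n.1 * c ^ n.2)
    (hasSum_geometric_of_norm_lt_one ha)
    (hasSum_mul_of_summable_norm (f := fun n => b ^ n) (g := fun n => c ^ n)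
      (hasSum_geometric_of_norm_lt_one hb) (hasSum_geometric_of_norm_lt_one hc) hb' hc')
    ha' (hb'.mul_norm hc')

/-- The exponent of `q` in the summand at `v = (X, Y, Z)`. -/
def qExponent (v : ℕ × ℕ × ℕ) : ℤ := 3 * (v.1 : ℤ) - 3 * (v.2.1 : ℤ) - (v.2.2 : ℤ)

/-- The exponent of `t` in the summand at `v = (X, Y, Z)`. -/
def tExponent (v : ℕ × ℕ × ℕ) : ℤ :=
  3 * (v.1 : ℤ) - min (v.1 : ℤ) (2 * (v.2.1 : ℤ)) -
    min (v.1 : ℤ) (4 * (v.2.1 : ℤ) + 3 * (v.2.2 : ℤ))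

/-- The summand of the series at `v = (X, Y, Z)`. Coordinates may vanish, so that it can also be
evaluated at the generators of the cones below. -/
def heisenbergWeight {𝕜 : Type*} [Field 𝕜] (q t : 𝕜) (v : ℕ × ℕ × ℕ) : 𝕜 :=
  q ^ qExponent v * t ^ tExponent v

/-- The point of the affine cone `b + ℕ u + ℕ v + ℕ w` with coordinates `n`. -/
def conePoint (b u v w n : ℕ × ℕ × ℕ) : ℕ × ℕ × ℕ :=
  b + n.1 • u + n.2.1 • v + n.2.2 • w

theorem conePoint_mk (b₁ b₂ b₃ u₁ u₂ u₃ v₁ v₂ v₃ w₁ w₂ w₃ i j k : ℕ) :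
    conePoint (b₁, b₂, b₃) (u₁, u₂, u₃) (v₁, v₂, v₃) (w₁, w₂, w₃) (i, j, k) =
      (b₁ + i * u₁ + j * v₁ + k * w₁, b₂ + i * u₂ + j * v₂ + k * w₂,
        b₃ + i * u₃ + j * v₃ + k * w₃) :=
  rfl

/-- The triples of positive integers inside `ℕ³`, the index set of the series. -/
def positiveTriples : Set (ℕ × ℕ × ℕ) := {p | 0 < p.1 ∧ 0 < p.2.1 ∧ 0 < p.2.2}

/-- The positive triples whose first coordinate lies in the half-open interval `(L, M]`, where the
bounds may depend on the triple. -/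
def layer (L M : ℕ × ℕ × ℕ → ℕ) : Set (ℕ × ℕ × ℕ) :=
  {p ∈ positiveTriples | L p < p.1 ∧ p.1 ≤ M p}

theorem self_le_tExponent (v : ℕ × ℕ × ℕ) : (v.1 : ℤ) ≤ tExponent v := by
  unfold tExponent
  omega

theorem two_mul_qExponent_le (v : ℕ × ℕ × ℕ) : 2 * qExponent v ≤ 3 * tExponent v := by
  unfold qExponent tExponent
  omega

theorem qExponent_conePoint (b u v w n : ℕ × ℕ × ℕ) :
    qExponent (conePoint b u v w n) =
      qExponent b + n.1 * qExponent u + n.2.1 * qExponent v + n.2.2 * qExponent w := by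
  simp only [qExponent, conePoint, Prod.fst_add, Prod.snd_add, Prod.smul_fst, Prod.smul_snd,
    smul_eq_mul]
  push_cast
  ring

theorem range_conePoint_yLayer (k : ℕ) :
    Set.range (conePoint (k + 1, 1, 1) (k, 1, 0) (k + 1, 1, 0) (0, 0, 1)) =
      layer (fun p => k * p.2.1) (fun p => (k + 1) * p.2.1) := by
  ext ⟨x, y, z⟩
  constructor
  · rintro ⟨⟨i, j, l⟩, h⟩
    simp only [conePoint_mk, Prod.mk.injEq] at h
    obtain ⟨rfl, rfl, rfl⟩ := h
    refine ⟨⟨?_, ?_, ?_⟩, ?_, ?_⟩ <;> dsimp only <;> grind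
  · rintro ⟨⟨-, -, hz⟩, hlt, hle⟩
    obtain ⟨j, hj⟩ := Nat.exists_eq_add_of_lt hlt
    obtain ⟨i, hi⟩ := Nat.exists_eq_add_of_le hle
    dsimp only at hz hj hi
    have hy : y = i + j + 1 := by linarith
    refine ⟨(i, j, z - 1), ?_⟩
    simp only [conePoint_mk, Prod.mk.injEq]
    refine ⟨?_, ?_, ?_⟩
    · rw [hj, hy]
      ring
    · rw [hy]
      ring
    · omega

theorem injective_conePoint_yLayer (k : ℕ) :
    Function.Injective (conePoint (k + 1, 1, 1) (k, 1, 0) (k + 1, 1, 0) (0, 0, 1)) := by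
  rintro ⟨i, j, l⟩ ⟨i', j', l'⟩ h
  simp only [conePoint_mk, Prod.mk.injEq] at h ⊢
  obtain ⟨hx, hy, hz⟩ := h
  have hij : k * (i + j) = k * (i' + j') := by congr 1; omega
  have : j = j' := by linarith
  omega

theorem range_conePoint_zLayer (k : ℕ) :
    Set.range (conePoint (4 + (k + 1), 1, 1) (4, 1, 0) (k + 1, 0, 1) (k, 0, 1)) =
      layer (fun p => 4 * p.2.1 + k * p.2.2) (fun p => 4 * p.2.1 + (k + 1) * p.2.2) := by
  ext ⟨x, y, z⟩
  constructor
  · rintro ⟨⟨i, j, l⟩, h⟩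
    simp only [conePoint_mk, Prod.mk.injEq] at h
    obtain ⟨rfl, rfl, rfl⟩ := h
    refine ⟨⟨?_, ?_, ?_⟩, ?_, ?_⟩ <;> dsimp only <;> grind
  · rintro ⟨⟨-, hy, -⟩, hlt, hle⟩
    obtain ⟨j, hj⟩ := Nat.exists_eq_add_of_lt hlt
    obtain ⟨l, hl⟩ := Nat.exists_eq_add_of_le hle
    dsimp only at hy hj hl
    have hz : z = j + l + 1 := by linarith
    obtain ⟨i, rfl⟩ := Nat.exists_eq_add_of_lt hy
    refine ⟨(i, j, l), ?_⟩
    simp only [conePoint_mk, Prod.mk.injEq]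
    refine ⟨?_, ?_, ?_⟩
    · rw [hj, hz]
      ring
    · ring
    · rw [hz]
      ring

theorem injective_conePoint_zLayer (k : ℕ) :
    Function.Injective (conePoint (4 + (k + 1), 1, 1) (4, 1, 0) (k + 1, 0, 1) (k, 0, 1)) := by
  rintro ⟨i, j, l⟩ ⟨i', j', l'⟩ h
  simp only [conePoint_mk, Prod.mk.injEq] at h ⊢
  obtain ⟨hx, hy, hz⟩ := h
  have hjl : k * (j + l) = k * (j' + l') := by congr 1; omega
  have : j = j' := by linarith
  omega

theorem range_conePoint_topLayer :
    Set.range (conePoint (8, 1, 1) (4, 1, 0) (1, 0, 0) (3, 0, 1)) =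
      {p ∈ positiveTriples | 4 * p.2.1 + 3 * p.2.2 < p.1} := by
  ext ⟨x, y, z⟩
  constructor
  · rintro ⟨⟨i, j, l⟩, h⟩
    simp only [conePoint_mk, Prod.mk.injEq] at h
    refine ⟨⟨?_, ?_, ?_⟩, ?_⟩ <;> dsimp only <;> omega
  · rintro ⟨⟨-, hy, hz⟩, hlt⟩
    dsimp only at hy hz hlt
    refine ⟨(y - 1, x - (4 * y + 3 * z) - 1, z - 1), ?_⟩
    simp only [conePoint_mk, Prod.mk.injEq]
    omega

theorem injective_conePoint_topLayer :
    Function.Injective (conePoint (8, 1, 1) (4, 1, 0) (1, 0, 0) (3, 0, 1)) := by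
  rintro ⟨i, j, l⟩ ⟨i', j', l'⟩ h
  simp only [conePoint_mk, Prod.mk.injEq] at h ⊢
  omega

theorem hasSum_positiveTriples_iff {α : Type*} [AddCommMonoid α] [TopologicalSpace α]
    {f : ℕ × ℕ × ℕ → α} {a : α} :
    HasSum (fun p : positiveTriples => f p) a ↔
      HasSum (fun p : ℕ+ × ℕ+ × ℕ+ => f ((p.1 : ℕ), (p.2.1 : ℕ), (p.2.2 : ℕ))) a := by
  have hinj : Function.Injective
      fun p : ℕ+ × ℕ+ × ℕ+ => ((p.1 : ℕ), (p.2.1 : ℕ), (p.2.2 : ℕ)) :=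
    PNat.coe_injective.prodMap (PNat.coe_injective.prodMap PNat.coe_injective)
  have hrange : Set.range (fun p : ℕ+ × ℕ+ × ℕ+ => ((p.1 : ℕ), (p.2.1 : ℕ), (p.2.2 : ℕ))) =
      positiveTriples := by
    ext ⟨x, y, z⟩
    constructor
    · rintro ⟨⟨i, j, k⟩, h⟩
      exact h ▸ ⟨i.pos, j.pos, k.pos⟩
    · rintro ⟨hx, hy, hz⟩
      exact ⟨(⟨x, hx⟩, ⟨y, hy⟩, ⟨z, hz⟩), rfl⟩
  rw [← hrange]
  exact hinj.hasSum_range_iff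

section Layer

variable {α : Type*} [AddCommMonoid α] [TopologicalSpace α] [ContinuousAdd α]

theorem layer_self (L : ℕ × ℕ × ℕ → ℕ) : layer L L = ∅ :=
  Set.eq_empty_of_forall_notMem fun _ hp => hp.2.2.not_gt hp.2.1

theorem hasSum_layer_trans {f : ℕ × ℕ × ℕ → α} {a b : α} {L M N : ℕ × ℕ × ℕ → ℕ}
    (hLM : L ≤ M) (hMN : M ≤ N) (ha : HasSum (fun p : layer L M => f p) a)
    (hb : HasSum (fun p : layer M N => f p) b) : HasSum (fun p : layer L N => f p) (a + b) := by
  have hdisj : Disjoint (layer L M) (layer M N) :=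
    Set.disjoint_left.2 fun p hp hp' => hp.2.2.not_gt hp'.2.1
  have hunion : layer L M ∪ layer M N = layer L N := by
    ext p
    have hL : L p ≤ M p := hLM p
    have hM : M p ≤ N p := hMN p
    simp only [layer, Set.mem_union, Set.mem_ofPred_eq]
    grind
  rw [← hunion]
  exact HasSum.add_disjoint hdisj ha hb

theorem hasSum_layer_telescope {f : ℕ × ℕ × ℕ → α} {M : ℕ → ℕ × ℕ × ℕ → ℕ} (hM : Monotone M)
    {a : ℕ → α} {n : ℕ} (ha : ∀ k < n, HasSum (fun p : layer (M k) (M (k + 1)) => f p) (a k)) :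
    HasSum (fun p : layer (M 0) (M n) => f p) (∑ k ∈ Finset.range n, a k) := by
  induction n with
  | zero =>
    rw [layer_self, Finset.sum_range_zero]
    exact hasSum_empty
  | succ n ih =>
    rw [Finset.sum_range_succ]
    exact hasSum_layer_trans (hM n.zero_le) (hM n.le_succ)
      (ih fun k hk => ha k (hk.trans n.lt_succ_self)) (ha n n.lt_succ_self)

theorem hasSum_positiveTriples_of_layer {f : ℕ × ℕ × ℕ → α} {a b : α} {M : ℕ × ℕ × ℕ → ℕ}
    (ha : HasSum (fun p : layer 0 M => f p) a)
    (hb : HasSum (fun p : {p ∈ positiveTriples | M p < p.1} => f p) b) :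
    HasSum (fun p : positiveTriples => f p) (a + b) := by
  have hdisj : Disjoint (layer 0 M) {p ∈ positiveTriples | M p < p.1} :=
    Set.disjoint_left.2 fun p hp hp' => hp.2.2.not_gt hp'.2
  have hunion : layer 0 M ∪ {p ∈ positiveTriples | M p < p.1} = positiveTriples := by
    ext p
    simp only [layer, positiveTriples, Set.mem_union, Set.mem_ofPred_eq, Pi.zero_apply]
    grind
  rw [← hunion]
  exact HasSum.add_disjoint hdisj ha hb

end Layer

theorem heisenbergWeight_conePoint {𝕜 : Type*} [Field 𝕜] {q t : 𝕜} (hq : q ≠ 0)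
    {b u v w n : ℕ × ℕ × ℕ}
    (hadd : tExponent (conePoint b u v w n) =
      tExponent b + n.1 * tExponent u + n.2.1 * tExponent v + n.2.2 * tExponent w) :
    heisenbergWeight q t (conePoint b u v w n) =
      heisenbergWeight q t b * (heisenbergWeight q t u ^ n.1 *
        (heisenbergWeight q t v ^ n.2.1 * heisenbergWeight q t w ^ n.2.2)) := by
  have tExponent_eq_natCast (p : ℕ × ℕ × ℕ) : ∃ d : ℕ, tExponent p = d :=
    Int.eq_ofNat_of_zero_le ((Int.natCast_nonneg _).trans (self_le_tExponent p))
  obtain ⟨db, hb⟩ := tExponent_eq_natCast b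
  obtain ⟨du, hu⟩ := tExponent_eq_natCast u
  obtain ⟨dv, hv⟩ := tExponent_eq_natCast v
  obtain ⟨dw, hw⟩ := tExponent_eq_natCast w
  simp only [heisenbergWeight, hadd, qExponent_conePoint, hb, hu, hv, hw, zpow_add₀ hq]
  norm_cast
  simp only [mul_comm (_ : ℤ) (qExponent _), zpow_mul, zpow_natCast, pow_add, mul_pow, ← pow_mul]
  ring

section HeisenbergWeight

variable {𝕜 : Type*} [NormedField 𝕜] {q t : 𝕜}

theorem norm_zpow_mul_pow_lt_one (hq : 1 < ‖q‖) (hqt : ‖q ^ 3 * t ^ 2‖ < 1) {e : ℤ} {d : ℕ}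
    (hed : 2 * e ≤ 3 * d) (hne : d ≠ 0 ∨ e < 0) : ‖q ^ e * t ^ d‖ < 1 := by
  have hq₀ : q ≠ 0 := norm_pos_iff.1 (one_pos.trans hq)
  have hsq : (q ^ e * t ^ d) ^ 2 = q ^ (2 * e - 3 * d) * (q ^ 3 * t ^ 2) ^ d := by
    rw [zpow_sub₀ hq₀, mul_comm 2 e, zpow_mul, ← Nat.cast_ofNat (n := 3), ← Nat.cast_mul,
      zpow_natCast, mul_pow (q ^ 3), ← pow_mul, ← pow_mul]
    field_simp
    ring
  refine (sq_lt_one_iff₀ (norm_nonneg _)).1 ?_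
  rw [← norm_pow, hsq, norm_mul, norm_zpow, norm_pow]
  rcases eq_or_ne d 0 with rfl | hd
  · simpa using zpow_lt_one_of_neg₀ hq (by omega : 2 * e < 0)
  · exact mul_lt_one_of_nonneg_of_lt_one_right (zpow_le_one_of_nonpos₀ hq.le (by omega))
      (by positivity) (pow_lt_one₀ (norm_nonneg _) hqt hd)

theorem norm_heisenbergWeight_lt_one (hq : 1 < ‖q‖) (hqt : ‖q ^ 3 * t ^ 2‖ < 1)
    {v : ℕ × ℕ × ℕ} (hv : v ≠ 0) : ‖heisenbergWeight q t v‖ < 1 := by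
  have hx := self_le_tExponent v
  have hqv := two_mul_qExponent_le v
  obtain ⟨d, hd⟩ := Int.eq_ofNat_of_zero_le (show 0 ≤ tExponent v by omega)
  rw [heisenbergWeight, hd, zpow_natCast]
  refine norm_zpow_mul_pow_lt_one hq hqt (by omega) ?_
  by_contra! h
  refine hv (Prod.ext ?_ (Prod.ext ?_ ?_)) <;> simp only [qExponent] at h <;> dsimp <;> omega

theorem hasSum_heisenbergWeight_cone (hq : 1 < ‖q‖) (hqt : ‖q ^ 3 * t ^ 2‖ < 1)
    {b u v w : ℕ × ℕ × ℕ} (hu : u ≠ 0) (hv : v ≠ 0) (hw : w ≠ 0)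
    (hinj : Function.Injective (conePoint b u v w))
    (hadd : ∀ n, tExponent (conePoint b u v w n) =
      tExponent b + n.1 * tExponent u + n.2.1 * tExponent v + n.2.2 * tExponent w) :
    HasSum (fun p : Set.range (conePoint b u v w) => heisenbergWeight q t p)
      (heisenbergWeight q t b / ((1 - heisenbergWeight q t u) * (1 - heisenbergWeight q t v) *
        (1 - heisenbergWeight q t w))) := by
  have hq₀ : q ≠ 0 := norm_pos_iff.1 (one_pos.trans hq)
  refine hinj.hasSum_range_iff.2 ?_
  convert! (hasSum_geometric_prod₃ (norm_heisenbergWeight_lt_one hq hqt hu)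
    (norm_heisenbergWeight_lt_one hq hqt hv)
    (norm_heisenbergWeight_lt_one hq hqt hw)).mul_left (heisenbergWeight q t b) using 1
  · exact funext fun n => heisenbergWeight_conePoint hq₀ (hadd n)
  · rw [div_eq_mul_inv, mul_inv, mul_inv, mul_assoc (_⁻¹)]

theorem hasSum_heisenbergWeight_yLayer (hq : 1 < ‖q‖) (hqt : ‖q ^ 3 * t ^ 2‖ < 1) {k : ℕ}
    (hk : k ≤ 3) :
    HasSum (fun p : layer (fun p => k * p.2.1) (fun p => (k + 1) * p.2.1) =>
        heisenbergWeight q t p)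
      (heisenbergWeight q t (k + 1, 1, 1) / ((1 - heisenbergWeight q t (k, 1, 0)) *
        (1 - heisenbergWeight q t (k + 1, 1, 0)) * (1 - heisenbergWeight q t (0, 0, 1)))) := by
  rw [← range_conePoint_yLayer]
  refine hasSum_heisenbergWeight_cone hq hqt (by simp) (by simp) (by simp)
    (injective_conePoint_yLayer k) fun ⟨i, j, l⟩ => ?_
  simp only [tExponent, conePoint_mk]
  interval_cases k <;> norm_num <;> omega

theorem hasSum_heisenbergWeight_zLayer (hq : 1 < ‖q‖) (hqt : ‖q ^ 3 * t ^ 2‖ < 1) {k : ℕ}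
    (hk : k ≤ 2) :
    HasSum (fun p : layer (fun p => 4 * p.2.1 + k * p.2.2)
        (fun p => 4 * p.2.1 + (k + 1) * p.2.2) => heisenbergWeight q t p)
      (heisenbergWeight q t (4 + (k + 1), 1, 1) / ((1 - heisenbergWeight q t (4, 1, 0)) *
        (1 - heisenbergWeight q t (k + 1, 0, 1)) * (1 - heisenbergWeight q t (k, 0, 1)))) := by
  rw [← range_conePoint_zLayer]
  refine hasSum_heisenbergWeight_cone hq hqt (by simp) (by simp) (by simp)
    (injective_conePoint_zLayer k) fun ⟨i, j, l⟩ => ?_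
  simp only [tExponent, conePoint_mk]
  interval_cases k <;> norm_num <;> omega

theorem hasSum_heisenbergWeight_topLayer (hq : 1 < ‖q‖) (hqt : ‖q ^ 3 * t ^ 2‖ < 1) :
    HasSum (fun p : {p ∈ positiveTriples | 4 * p.2.1 + 3 * p.2.2 < p.1} => heisenbergWeight q t p)
      (heisenbergWeight q t (8, 1, 1) / ((1 - heisenbergWeight q t (4, 1, 0)) *
        (1 - heisenbergWeight q t (1, 0, 0)) * (1 - heisenbergWeight q t (3, 0, 1)))) := by
  rw [← range_conePoint_topLayer]
  refine hasSum_heisenbergWeight_cone hq hqt (by simp) (by simp) (by simp)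
    injective_conePoint_topLayer fun ⟨i, j, l⟩ => ?_
  simp only [tExponent, conePoint_mk]
  norm_num
  omega

theorem hasSum_heisenbergWeight_yLayers (hq : 1 < ‖q‖) (hqt : ‖q ^ 3 * t ^ 2‖ < 1) :
    HasSum (fun p : layer 0 (fun p => 4 * p.2.1) => heisenbergWeight q t p)
      (∑ k ∈ Finset.range 4, heisenbergWeight q t (k + 1, 1, 1) /
        ((1 - heisenbergWeight q t (k, 1, 0)) * (1 - heisenbergWeight q t (k + 1, 1, 0)) *
          (1 - heisenbergWeight q t (0, 0, 1)))) := by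
  have hM : Monotone fun (k : ℕ) (p : ℕ × ℕ × ℕ) => k * p.2.1 :=
    fun k l hkl p => Nat.mul_le_mul_right _ hkl
  have hM₀ : (0 : ℕ × ℕ × ℕ → ℕ) = fun p => 0 * p.2.1 := by
    simp only [zero_mul, Pi.zero_def]
  rw [hM₀]
  exact hasSum_layer_telescope hM fun k hk =>
    hasSum_heisenbergWeight_yLayer hq hqt (Nat.le_of_lt_succ hk)

theorem hasSum_heisenbergWeight_zLayers (hq : 1 < ‖q‖) (hqt : ‖q ^ 3 * t ^ 2‖ < 1) :
    HasSum (fun p : layer (fun p => 4 * p.2.1) (fun p => 4 * p.2.1 + 3 * p.2.2) =>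
        heisenbergWeight q t p)
      (∑ k ∈ Finset.range 3, heisenbergWeight q t (4 + (k + 1), 1, 1) /
        ((1 - heisenbergWeight q t (4, 1, 0)) * (1 - heisenbergWeight q t (k + 1, 0, 1)) *
          (1 - heisenbergWeight q t (k, 0, 1)))) := by
  have hM : Monotone fun (k : ℕ) (p : ℕ × ℕ × ℕ) => 4 * p.2.1 + k * p.2.2 :=
    fun k l hkl p => Nat.add_le_add_left (Nat.mul_le_mul_right _ hkl) _
  have hM₀ : (fun p : ℕ × ℕ × ℕ => 4 * p.2.1) = fun p => 4 * p.2.1 + 0 * p.2.2 := by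
    simp only [zero_mul, add_zero]
  rw [hM₀]
  exact hasSum_layer_telescope hM fun k hk =>
    hasSum_heisenbergWeight_zLayer hq hqt (Nat.le_of_lt_succ hk)

theorem hasSum_heisenbergWeight_positiveTriples (hq : 1 < ‖q‖) (hqt : ‖q ^ 3 * t ^ 2‖ < 1) :
    HasSum (fun p : positiveTriples => heisenbergWeight q t p)
      (∑ k ∈ Finset.range 4, heisenbergWeight q t (k + 1, 1, 1) /
          ((1 - heisenbergWeight q t (k, 1, 0)) * (1 - heisenbergWeight q t (k + 1, 1, 0)) *
            (1 - heisenbergWeight q t (0, 0, 1))) +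
        ∑ k ∈ Finset.range 3, heisenbergWeight q t (4 + (k + 1), 1, 1) /
          ((1 - heisenbergWeight q t (4, 1, 0)) * (1 - heisenbergWeight q t (k + 1, 0, 1)) *
            (1 - heisenbergWeight q t (k, 0, 1))) +
        heisenbergWeight q t (8, 1, 1) / ((1 - heisenbergWeight q t (4, 1, 0)) *
          (1 - heisenbergWeight q t (1, 0, 0)) * (1 - heisenbergWeight q t (3, 0, 1)))) :=
  hasSum_positiveTriples_of_layer
    (hasSum_layer_trans (fun _ => Nat.zero_le _) (fun _ => Nat.le_add_right _ _)
      (hasSum_heisenbergWeight_yLayers hq hqt) (hasSum_heisenbergWeight_zLayers hq hqt))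
    (hasSum_heisenbergWeight_topLayer hq hqt)

end HeisenbergWeight

theorem heisenberg_Z322b1_general {𝕜 : Type*} [NormedField 𝕜] (q t : 𝕜) (hq : 1 < ‖q‖)
    (hqt : ‖q ^ 3 * t ^ 2‖ < 1) :
    HasSum
      (fun p : ℕ+ × ℕ+ × ℕ+ =>
        q ^ (3 * ((p.1 : ℕ) : ℤ) - 3 * ((p.2.1 : ℕ) : ℤ) - ((p.2.2 : ℕ) : ℤ)) *
          t ^ (3 * ((p.1 : ℕ) : ℤ) -
            min ((p.1 : ℕ) : ℤ) (2 * ((p.2.1 : ℕ) : ℤ)) -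
            min ((p.1 : ℕ) : ℤ) (4 * ((p.2.1 : ℕ) : ℤ) + 3 * ((p.2.2 : ℕ) : ℤ))))
      (t / ((q - 1) * (1 - q⁻¹ ^ 3) * (1 - t)) +
        q ^ 2 * t ^ 2 / ((1 - q⁻¹) * (1 - t) * (1 - q ^ 3 * t ^ 2)) +
        q ^ 5 * t ^ 4 / ((1 - q⁻¹) * (1 - q ^ 3 * t ^ 2) * (1 - q ^ 6 * t ^ 4)) +
        q ^ 8 * t ^ 6 / ((1 - q⁻¹) * (1 - q ^ 9 * t ^ 6) * (1 - q ^ 6 * t ^ 4)) +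
        q ^ 11 * t ^ 8 / ((1 - q⁻¹) * (1 - q ^ 9 * t ^ 6) * (1 - q ^ 2 * t ^ 2)) +
        q ^ 14 * t ^ 10 /
          ((1 - q ^ 9 * t ^ 6) * (1 - q ^ 5 * t ^ 4) * (1 - q ^ 2 * t ^ 2)) +
        q ^ 17 * t ^ 12 /
          ((1 - q ^ 9 * t ^ 6) * (1 - q ^ 8 * t ^ 6) * (1 - q ^ 5 * t ^ 4)) +
        q ^ 20 * t ^ 15 /
          ((1 - q ^ 9 * t ^ 6) * (1 - q ^ 3 * t ^ 3) * (1 - q ^ 8 * t ^ 6))) := by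
  have hq₀ : q ≠ 0 := norm_pos_iff.1 (one_pos.trans hq)
  have hq₁ : (q - 1)⁻¹ = q⁻¹ * (1 - q⁻¹)⁻¹ := by
    rw [← mul_inv, mul_sub, mul_inv_cancel₀ hq₀, mul_one]
  convert! hasSum_positiveTriples_iff.1 (hasSum_heisenbergWeight_positiveTriples hq hqt) using 1
  simp only [Finset.sum_range_succ, Finset.sum_range_zero, heisenbergWeight, qExponent, tExponent,
    div_eq_mul_inv, mul_inv, hq₁]
  norm_num
  ring

theorem norm_pow_three_mul_sq_lt_one {q t : ℝ} (hq : 1 ≤ q) (ht : 0 ≤ t) (hqt : q ^ 3 * t < 1) :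
    ‖q ^ 3 * t ^ 2‖ < 1 := by
  have ht₁ : t < 1 := (le_mul_of_one_le_left ht (one_le_pow₀ hq)).trans_lt hqt
  rw [Real.norm_of_nonneg (by positivity), sq, ← mul_assoc]
  exact mul_lt_one_of_nonneg_of_lt_one_right hqt.le ht ht₁

/-- The series computing 𝒵₃₂₂ᵦ₁:
    ∑_{X,Y,Z≥1} q^{3X-3Y-Z} t^{3X-min(X,2Y)-min(X,4Y+3Z)}. -/
theorem heisenberg_Z322b1 (q t : ℝ) (hq : 1 < q) (ht : 0 < t) (hqt : q ^ 3 * t < 1) :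
    HasSum
      (fun p : ℕ+ × ℕ+ × ℕ+ =>
        q ^ (3 * ((p.1 : ℕ) : ℤ) - 3 * ((p.2.1 : ℕ) : ℤ) - ((p.2.2 : ℕ) : ℤ)) *
          t ^ (3 * ((p.1 : ℕ) : ℤ) -
            min ((p.1 : ℕ) : ℤ) (2 * ((p.2.1 : ℕ) : ℤ)) -
            min ((p.1 : ℕ) : ℤ) (4 * ((p.2.1 : ℕ) : ℤ) + 3 * ((p.2.2 : ℕ) : ℤ))))
      (t / ((q - 1) * (1 - q⁻¹ ^ 3) * (1 - t)) +
        q ^ 2 * t ^ 2 / ((1 - q⁻¹) * (1 - t) * (1 - q ^ 3 * t ^ 2)) +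
        q ^ 5 * t ^ 4 / ((1 - q⁻¹) * (1 - q ^ 3 * t ^ 2) * (1 - q ^ 6 * t ^ 4)) +
        q ^ 8 * t ^ 6 / ((1 - q⁻¹) * (1 - q ^ 9 * t ^ 6) * (1 - q ^ 6 * t ^ 4)) +
        q ^ 11 * t ^ 8 / ((1 - q⁻¹) * (1 - q ^ 9 * t ^ 6) * (1 - q ^ 2 * t ^ 2)) +
        q ^ 14 * t ^ 10 /
          ((1 - q ^ 9 * t ^ 6) * (1 - q ^ 5 * t ^ 4) * (1 - q ^ 2 * t ^ 2)) +
        q ^ 17 * t ^ 12 /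
          ((1 - q ^ 9 * t ^ 6) * (1 - q ^ 8 * t ^ 6) * (1 - q ^ 5 * t ^ 4)) +
        q ^ 20 * t ^ 15 /
          ((1 - q ^ 9 * t ^ 6) * (1 - q ^ 3 * t ^ 3) * (1 - q ^ 8 * t ^ 6))) :=
  heisenberg_Z322b1_general q t (hq.trans_le (le_abs_self q))
    (norm_pow_three_mul_sq_lt_one hq.le ht.le hqt)
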